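/- arXiv:1504.05741 — 4 statements merged into one kernel-verified Lean document; each statement's English description precedes it below -/
import Mathlib

section
/- (Radial gauge estimate, Euclidean model of Lemma 3.1.1.) Let A be a gauge potential on ℝ⁴ in radial gauge, with curvature F, and suppose K ≥ 0 satisfies ‖F_{μν}(y)‖ ≤ K for all y ∈ ℝ⁴ and all indices μ, ν. Then ‖A_ν(x)‖ ≤ K·‖x‖ for every x ∈ ℝ⁴ and every index ν. -/
/-!
Contracting the curvature with the position vector gives, in radial gauge,
`∑ μ, x_μ F_{μν}(x) = (x · ∇) A_ν(x) + A_ν(x)`: the commutator terms vanish because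
`∑ μ, x_μ A_μ = 0`, and differentiating this relation in direction `ν` gives
`∑ μ, x_μ ∂_ν A_μ = -A_ν`. Hence `t ↦ t A_ν(t x)` has derivative `∑ μ, (t x)_μ F_{μν}(t x)`,
of norm at most `K ∑ μ, |t x_μ| ≤ 2 K t ‖x‖` by Cauchy–Schwarz in dimension four.
Comparison with `t ↦ K ‖x‖ t²` on `[0, 1]` yields the estimate. The mean value inequality is used
instead of an integral because the algebra is not assumed complete.
-/

/-- The radial contraction of the curvature of a potential in radial gauge. -/
lemma radial_contraction {𝒜 : Type*} [NormedRing 𝒜] [NormedAlgebra ℝ 𝒜]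
    (A : EuclideanSpace ℝ (Fin 4) → Fin 4 → 𝒜)
    (hd : ∀ μ, Differentiable ℝ fun y => A y μ)
    (hrad : ∀ x : EuclideanSpace ℝ (Fin 4), ∑ μ : Fin 4, x μ • A x μ = 0)
    (x : EuclideanSpace ℝ (Fin 4)) (ν : Fin 4) :
    ∑ μ : Fin 4, x μ • (fderiv ℝ (fun y => A y ν) x (EuclideanSpace.single μ (1 : ℝ))
        - fderiv ℝ (fun y => A y μ) x (EuclideanSpace.single ν (1 : ℝ))
        + A x μ * A x ν - A x ν * A x μ)
      = fderiv ℝ (fun y => A y ν) x x + A x ν := by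
  have h1 : ∑ μ : Fin 4, x μ • fderiv ℝ (fun y => A y ν) x (EuclideanSpace.single μ (1 : ℝ))
      = fderiv ℝ (fun y => A y ν) x x := by
    have hx : x = ∑ μ : Fin 4, x μ • EuclideanSpace.single μ (1 : ℝ) := by
      ext i
      simp [Pi.single_apply]
    have h := congrArg (fderiv ℝ (fun y => A y ν) x) hx
    simp only [map_sum, map_smul] at h
    exact h.symm
  have h2 : ∑ μ : Fin 4, x μ • fderiv ℝ (fun y => A y μ) x (EuclideanSpace.single ν (1 : ℝ))
      = - A x ν := by
    have hsum : HasFDerivAt (fun y : EuclideanSpace ℝ (Fin 4) => ∑ μ : Fin 4, y μ • A y μ)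
        (∑ μ : Fin 4, (x μ • fderiv ℝ (fun y => A y μ) x
          + (EuclideanSpace.proj (𝕜 := ℝ) μ : EuclideanSpace ℝ (Fin 4) →L[ℝ] ℝ).smulRight
              (A x μ))) x :=
      HasFDerivAt.fun_sum fun μ _ =>
        (EuclideanSpace.proj (𝕜 := ℝ) μ : EuclideanSpace ℝ (Fin 4) →L[ℝ] ℝ).hasFDerivAt.smul
          (hd μ x).hasFDerivAt
    have hzero : HasFDerivAt (fun y : EuclideanSpace ℝ (Fin 4) => ∑ μ : Fin 4, y μ • A y μ)
        (0 : EuclideanSpace ℝ (Fin 4) →L[ℝ] 𝒜) x := by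
      simp only [hrad]
      exact hasFDerivAt_const 0 x
    have h := congrArg (fun L => L (EuclideanSpace.single ν (1 : ℝ))) (hsum.unique hzero)
    simp [Finset.sum_add_distrib, ite_smul] at h
    exact eq_neg_of_add_eq_zero_left h
  have h3 : ∑ μ : Fin 4, x μ • (A x μ * A x ν) = 0 := by
    simp only [← smul_mul_assoc, ← Finset.sum_mul, hrad, zero_mul]
  have h4 : ∑ μ : Fin 4, x μ • (A x ν * A x μ) = 0 := by
    simp only [← mul_smul_comm, ← Finset.mul_sum, hrad, mul_zero]
  simp only [smul_sub, smul_add, Finset.sum_add_distrib, Finset.sum_sub_distrib, h1, h2, h3, h4]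
  abel

lemma sum_abs_le_two_mul_norm (x : EuclideanSpace ℝ (Fin 4)) :
    ∑ μ : Fin 4, |x μ| ≤ 2 * ‖x‖ := by
  have h := sq_sum_le_card_mul_sum_sq (s := Finset.univ) (f := fun μ : Fin 4 => |x μ|)
  have hn := EuclideanSpace.norm_sq_eq x
  simp only [Real.norm_eq_abs] at hn
  rw [← hn] at h
  refine abs_le_of_sq_le_sq' ?_ (by positivity) |>.2
  simp at h
  linarith

/-- Radial gauge estimate, Euclidean model of Lemma 3.1.1.
If a smooth gauge potential `A` on `ℝ⁴` with values in a real normed algebra `𝒜` is in radial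
gauge, and every component of its curvature `F` is bounded in norm by `K ≥ 0`, then
`‖A_ν(x)‖ ≤ K · ‖x‖` for every `x` and every index `ν`. -/
theorem radial_gauge_estimate {𝒜 : Type*} [NormedRing 𝒜] [NormedAlgebra ℝ 𝒜]
    (A : EuclideanSpace ℝ (Fin 4) → Fin 4 → 𝒜)
    (hA : ContDiff ℝ (⊤ : ℕ∞) A)
    (hrad : ∀ x : EuclideanSpace ℝ (Fin 4), ∑ μ : Fin 4, x μ • A x μ = 0)
    (F : Fin 4 → Fin 4 → EuclideanSpace ℝ (Fin 4) → 𝒜)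
    (hF : ∀ (μ ν : Fin 4) (x : EuclideanSpace ℝ (Fin 4)),
      F μ ν x = fderiv ℝ (fun y => A y ν) x (EuclideanSpace.single μ (1 : ℝ))
        - fderiv ℝ (fun y => A y μ) x (EuclideanSpace.single ν (1 : ℝ))
        + A x μ * A x ν - A x ν * A x μ)
    (K : ℝ) (hK : 0 ≤ K)
    (hbound : ∀ (x : EuclideanSpace ℝ (Fin 4)) (μ ν : Fin 4), ‖F μ ν x‖ ≤ K) :
    ∀ (x : EuclideanSpace ℝ (Fin 4)) (ν : Fin 4), ‖A x ν‖ ≤ K * ‖x‖ := by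
  intro x ν
  have hAd : Differentiable ℝ A := hA.differentiable (by simp)
  have hd : ∀ μ, Differentiable ℝ fun y => A y μ := fun μ => differentiable_pi.1 hAd μ
  have hderiv : ∀ t : ℝ, HasDerivAt (fun t : ℝ => t • A (t • x) ν)
      (∑ μ : Fin 4, (t • x) μ • F μ ν (t • x)) t := by
    intro t
    have hline : HasDerivAt (fun t : ℝ => t • x) x t := by
      simpa using (hasDerivAt_id t).smul_const x
    have h := (hasDerivAt_id t).smul ((hd ν (t • x)).hasFDerivAt.comp_hasDerivAt t hline)
    refine h.congr_deriv ?_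
    simp only [hF]
    rw [radial_contraction A hd hrad (t • x) ν]
    simp
  have hle : ∀ t ∈ Set.Ico (0 : ℝ) 1,
      ‖∑ μ : Fin 4, (t • x) μ • F μ ν (t • x)‖ ≤ K * ‖x‖ * (2 * t) := by
    intro t ht
    calc ‖∑ μ : Fin 4, (t • x) μ • F μ ν (t • x)‖
        ≤ ∑ μ : Fin 4, |(t • x) μ| * K := by
          refine norm_sum_le_of_le _ fun μ _ => ?_
          rw [norm_smul, Real.norm_eq_abs]
          exact mul_le_mul_of_nonneg_left (hbound _ _ _) (abs_nonneg _)
      _ = (∑ μ : Fin 4, |(t • x) μ|) * K := by rw [Finset.sum_mul]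
      _ ≤ 2 * ‖t • x‖ * K := mul_le_mul_of_nonneg_right (sum_abs_le_two_mul_norm _) hK
      _ = K * ‖x‖ * (2 * t) := by
          rw [norm_smul, Real.norm_of_nonneg ht.1]
          ring
  have hB : ∀ t : ℝ, HasDerivAt (fun t : ℝ => K * ‖x‖ * t ^ 2) (K * ‖x‖ * (2 * t)) t := by
    intro t
    simpa using (hasDerivAt_pow 2 t).const_mul (K * ‖x‖)
  have h := image_norm_le_of_norm_deriv_right_le_deriv_boundary
    (fun t _ => (hderiv t).continuousAt.continuousWithinAt)
    (fun t _ => (hderiv t).hasDerivWithinAt) (by simp) hB hle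
    (Set.right_mem_Icc.2 (zero_le_one' ℝ))
  simpa using h
end

section
/- Let A be a gauge potential on ℝ⁴ in radial gauge, with curvature F. Fix x ∈ ℝ⁴ and an index ν. Then for every λ > 0 the function λ ↦ λ⁻¹·A_ν(x/λ) (the ν-component of the pullback of A by the dilation c_λ : x ↦ x/λ) is differentiable at λ, with derivative equal to −λ⁻²·Σ_μ (x_μ/λ)·F_{μν}(x/λ). That is, ∂/∂λ (c_λ^* A) = −λ⁻¹·c_λ^*(ι_r F), the pullback of the contraction of the curvature with the radial vector field r = x^μ ∂_μ. -/
/-!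
Write `y = x/λ`. By the product and chain rules, the derivative of `λ⁻¹ • A_ν(x/λ)` is
`-λ⁻² • (A_ν(y) + D A_ν(y) y)`, so it suffices to identify `ι_r F` in radial gauge:
`Σ_μ y_μ F_{μν}(y) = A_ν(y) + D A_ν(y) y` (`radial_contraction_curvature`). The commutator terms
contract to zero by the gauge condition, and differentiating that condition in the direction `ν`
(`radial_gauge_deriv`) gives `Σ_μ y_μ ∂_ν A_μ(y) = -A_ν(y)`.
-/

/-- The derivative of the radial gauge condition in the `ν`-th coordinate direction. -/
lemma radial_gauge_deriv {E : Type*} [NormedAddCommGroup E] [NormedSpace ℝ E]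
    (A : EuclideanSpace ℝ (Fin 4) → Fin 4 → E)
    (hd : ∀ μ, Differentiable ℝ (fun y => A y μ))
    (hrad : ∀ x : EuclideanSpace ℝ (Fin 4), ∑ μ : Fin 4, x μ • A x μ = 0)
    (y : EuclideanSpace ℝ (Fin 4)) (ν : Fin 4) :
    A y ν + ∑ μ : Fin 4, y μ • fderiv ℝ (fun z => A z μ) y (EuclideanSpace.single ν (1 : ℝ))
      = 0 := by
  have h : HasFDerivAt (fun z : EuclideanSpace ℝ (Fin 4) => ∑ μ : Fin 4, z μ • A z μ)
      (∑ μ : Fin 4, (y μ • fderiv ℝ (fun z => A z μ) y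
        + (EuclideanSpace.proj μ : EuclideanSpace ℝ (Fin 4) →L[ℝ] ℝ).smulRight (A y μ))) y :=
    HasFDerivAt.fun_sum fun μ _ =>
      (EuclideanSpace.proj (𝕜 := ℝ) μ).hasFDerivAt.smul (hd μ y).hasFDerivAt
  have h0 : (fun z : EuclideanSpace ℝ (Fin 4) => ∑ μ : Fin 4, z μ • A z μ) = fun _ => 0 :=
    funext hrad
  rw [h0] at h
  have h1 := congrArg (fun L => L (EuclideanSpace.single ν (1 : ℝ)))
    (h.unique (hasFDerivAt_const _ _))
  simpa [sum_apply, Finset.sum_add_distrib, add_comm, Pi.single_apply,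
    ite_smul] using h1

/-- In radial gauge, the contraction of the curvature with the radial vector field is
`A_ν + y^μ ∂_μ A_ν`, with no quadratic term. -/
lemma radial_contraction_curvature {𝒜 : Type*} [NormedRing 𝒜] [NormedAlgebra ℝ 𝒜]
    (A : EuclideanSpace ℝ (Fin 4) → Fin 4 → 𝒜)
    (hd : ∀ μ, Differentiable ℝ (fun y => A y μ))
    (hrad : ∀ x : EuclideanSpace ℝ (Fin 4), ∑ μ : Fin 4, x μ • A x μ = 0)
    (y : EuclideanSpace ℝ (Fin 4)) (ν : Fin 4) :
    ∑ μ : Fin 4, y μ • (fderiv ℝ (fun z => A z ν) y (EuclideanSpace.single μ (1 : ℝ))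
        - fderiv ℝ (fun z => A z μ) y (EuclideanSpace.single ν (1 : ℝ))
        + A y μ * A y ν - A y ν * A y μ)
      = A y ν + fderiv ℝ (fun z => A z ν) y y := by
  have h1 : ∑ μ : Fin 4, y μ • fderiv ℝ (fun z => A z ν) y (EuclideanSpace.single μ (1 : ℝ))
      = fderiv ℝ (fun z => A z ν) y y := by
    have hy : ∑ μ : Fin 4, y μ • EuclideanSpace.single μ (1 : ℝ) = y := by
      ext i
      simp [Pi.single_apply]
    have hL := congrArg (fderiv ℝ (fun z => A z ν) y) hy
    rwa [map_sum, Finset.sum_congr rfl fun μ _ => map_smul _ _ _] at hL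
  have h2 : ∑ μ : Fin 4, y μ • (A y μ * A y ν) = 0 := by
    simp only [← smul_mul_assoc, ← Finset.sum_mul, hrad, zero_mul]
  have h3 : ∑ μ : Fin 4, y μ • (A y ν * A y μ) = 0 := by
    simp only [← mul_smul_comm, ← Finset.mul_sum, hrad, mul_zero]
  simp only [smul_sub, smul_add, Finset.sum_sub_distrib, Finset.sum_add_distrib, h1, h2, h3]
  rw [eq_neg_of_add_eq_zero_left (radial_gauge_deriv A hd hrad y ν)]
  abel

/-- For a smooth gauge potential `A` on `ℝ⁴` in radial gauge with curvature
`F`, and fixed `x ∈ ℝ⁴` and index `ν`, the function `λ ↦ λ⁻¹ · A_ν(x/λ)` (the ν-component of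
the pullback of `A` by the dilation `c_λ : x ↦ x/λ`) is differentiable at each `λ > 0`, with
derivative `−λ⁻² · Σ_μ (x_μ/λ) · F_{μν}(x/λ)`; that is,
`∂/∂λ (c_λ^* A) = −λ⁻¹ · c_λ^*(ι_r F)`. -/
theorem dilation_derivative_formula {𝒜 : Type*} [NormedRing 𝒜] [NormedAlgebra ℝ 𝒜]
    (A : EuclideanSpace ℝ (Fin 4) → Fin 4 → 𝒜)
    (hA : ContDiff ℝ (⊤ : ℕ∞) A)
    (hrad : ∀ x : EuclideanSpace ℝ (Fin 4), ∑ μ : Fin 4, x μ • A x μ = 0)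
    (F : Fin 4 → Fin 4 → EuclideanSpace ℝ (Fin 4) → 𝒜)
    (hF : ∀ (μ ν : Fin 4) (x : EuclideanSpace ℝ (Fin 4)),
      F μ ν x = fderiv ℝ (fun y => A y ν) x (EuclideanSpace.single μ (1 : ℝ))
        - fderiv ℝ (fun y => A y μ) x (EuclideanSpace.single ν (1 : ℝ))
        + A x μ * A x ν - A x ν * A x μ)
    (x : EuclideanSpace ℝ (Fin 4)) (ν : Fin 4) :
    ∀ lam : ℝ, 0 < lam →
      HasDerivAt (fun l : ℝ => l⁻¹ • A (l⁻¹ • x) ν)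
        (-(lam ^ 2)⁻¹ • ∑ μ : Fin 4, (x μ / lam) • F μ ν (lam⁻¹ • x)) lam := by
  intro lam hlam
  have hd : ∀ μ, Differentiable ℝ (fun y => A y μ) := fun μ =>
    differentiable_pi.1 (hA.differentiable (by simp)) μ
  have hinv := hasDerivAt_inv hlam.ne'
  have hcomp : HasDerivAt (fun l : ℝ => A (l⁻¹ • x) ν)
      (fderiv ℝ (fun z => A z ν) (lam⁻¹ • x) (-(lam ^ 2)⁻¹ • x)) lam :=
    HasFDerivAt.comp_hasDerivAt (l := fun z => A z ν) (f := fun l : ℝ => l⁻¹ • x) lam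
      (hd ν (lam⁻¹ • x)).hasFDerivAt (hinv.smul_const x)
  have hsum : ∑ μ : Fin 4, (x μ / lam) • F μ ν (lam⁻¹ • x)
      = A (lam⁻¹ • x) ν + fderiv ℝ (fun z => A z ν) (lam⁻¹ • x) (lam⁻¹ • x) := by
    rw [← radial_contraction_curvature A hd hrad (lam⁻¹ • x) ν]
    refine Finset.sum_congr rfl fun μ _ => ?_
    rw [hF, PiLp.smul_apply, smul_eq_mul, div_eq_inv_mul]
  refine (hinv.smul hcomp).congr_deriv ?_
  rw [hsum, map_smul, map_smul, smul_add, smul_comm (lam⁻¹), add_comm]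
end

section
/- Let E be a real normed vector space, let N ≥ 1, let 0 < λ ≤ 1, and let ω : ℝ⁴ → E be a C¹ map supported in the closed ball of radius N·λ^{−1/2} about the origin. Then the pointwise λ-derivative of the rescaled one-form, the map x ↦ d/dλ[λ⁻¹·ω(x/λ)], satisfies the L² bound ‖x ↦ d/dλ[λ⁻¹·ω(x/λ)]‖_{L²(ℝ⁴)} ≤ N·λ^{−1/2}·(‖ω‖_{L²(ℝ⁴)} + ‖Dω‖_{L²(ℝ⁴)}), where ‖Dω‖_{L²} denotes the L² norm of the function y ↦ ‖Dω(y)‖ (operator norm of the Fréchet derivative). -/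
open MeasureTheory

/-!
With `y = x/λ`, the chain rule gives `d/dλ[λ⁻¹ ω(x/λ)] = -λ⁻² (ω(y) + Dω(y) y)`. Since `Dω` is
supported where `‖y‖ ≤ R := N λ^{-1/2}` and `R ≥ 1`, this derivative has norm at most
`λ⁻² R (‖ω(y)‖ + ‖Dω(y)‖)`. In dimension four the substitution `x = λ y` contributes a factor
`λ⁴` to the integral of the square, which exactly cancels `(λ⁻²)²`; Minkowski's inequality
in `L²` then splits the two terms.
-/

/-- Minkowski's inequality in `L²` for continuous compactly supported nonnegative functions,
stated for Bochner integrals. -/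
lemma sqrt_integral_add_sq_le {a b : EuclideanSpace ℝ (Fin 4) → ℝ}
    (ha : Continuous a) (hb : Continuous b) (hac : HasCompactSupport a)
    (hbc : HasCompactSupport b) (ha0 : ∀ x, 0 ≤ a x) (hb0 : ∀ x, 0 ≤ b x) :
    √(∫ x, (a x + b x) ^ 2) ≤ √(∫ x, a x ^ 2) + √(∫ x, b x ^ 2) := by
  have hol := integral_mul_le_Lp_mul_Lq_of_nonneg (μ := volume) Real.HolderConjugate.two_two
    (Filter.Eventually.of_forall ha0) (Filter.Eventually.of_forall hb0)
    (ha.memLp_of_hasCompactSupport hac) (hb.memLp_of_hasCompactSupport hbc)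
  simp only [Real.rpow_two, ← Real.sqrt_eq_rpow] at hol
  have ia : Integrable (fun x => a x ^ 2) :=
    (ha.memLp_of_hasCompactSupport hac).integrable_sq
  have ib : Integrable (fun x => b x ^ 2) :=
    (hb.memLp_of_hasCompactSupport hbc).integrable_sq
  have iab : Integrable (fun x => a x * b x) :=
    (ha.mul hb).integrable_of_hasCompactSupport hac.mul_right
  have iac : Integrable (fun x => a x ^ 2 + 2 * (a x * b x)) := ia.add (iab.const_mul 2)
  have key : ∫ x, (a x + b x) ^ 2
      = (∫ x, a x ^ 2) + 2 * (∫ x, a x * b x) + ∫ x, b x ^ 2 := by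
    rw [← integral_const_mul, ← integral_add ia (iab.const_mul 2),
      ← integral_add iac ib]
    congr 1
    ext x
    ring
  apply Real.sqrt_le_iff.2 ⟨by positivity, ?_⟩
  have h1 := Real.sq_sqrt (integral_nonneg (μ := volume) (fun x => sq_nonneg (a x)))
  have h2 := Real.sq_sqrt (integral_nonneg (μ := volume) (fun x => sq_nonneg (b x)))
  rw [key]
  nlinarith

/-- The scale derivative of `l⁻¹ ω(x/l)`: minus `l⁻²` times `ω + Dω(y) y` at `y = x/l`. -/
lemma hasDerivAt_rescale {E : Type*} [NormedAddCommGroup E] [NormedSpace ℝ E]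
    {lam : ℝ} (hlam : 0 < lam) {ω : EuclideanSpace ℝ (Fin 4) → E} (hω : ContDiff ℝ 1 ω)
    (x : EuclideanSpace ℝ (Fin 4)) :
    HasDerivAt (fun l : ℝ => l⁻¹ • ω (l⁻¹ • x))
      (-(lam ^ 2)⁻¹ • (ω (lam⁻¹ • x) + fderiv ℝ ω (lam⁻¹ • x) (lam⁻¹ • x))) lam := by
  have h1 := hasDerivAt_inv hlam.ne'
  have h2 : HasDerivAt (fun l : ℝ => l⁻¹ • x) (-(lam ^ 2)⁻¹ • x) lam := h1.smul_const x
  have h3 := ((hω.differentiable (by norm_num)) (lam⁻¹ • x)).hasFDerivAt.comp_hasDerivAt lam h2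
  have h4 := h1.smul h3
  refine h4.congr_deriv ?_
  simp only [map_smul, smul_add, Function.comp]
  rw [add_comm, smul_comm]



/-- Let `N ≥ 1`, `0 < λ ≤ 1`, and let `ω : ℝ⁴ → E` be a `C¹` map supported
in the closed ball of radius `N·λ^{−1/2}` about the origin. Then the pointwise `λ`-derivative
of the rescaled one-form, `x ↦ d/dλ[λ⁻¹·ω(x/λ)]`, satisfies the `L²` bound
`‖d/dλ (c_λ^* ω)‖_{L²} ≤ N·λ^{−1/2}·(‖ω‖_{L²} + ‖Dω‖_{L²})`. -/
theorem scale_derivative_L2_estimate {E : Type*} [NormedAddCommGroup E] [NormedSpace ℝ E]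
    (N : ℝ) (hN : 1 ≤ N) (lam : ℝ) (hlam : 0 < lam) (hlam1 : lam ≤ 1)
    (ω : EuclideanSpace ℝ (Fin 4) → E) (hω : ContDiff ℝ 1 ω)
    (hsupp : tsupport ω ⊆ Metric.closedBall 0 (N * (Real.sqrt lam)⁻¹)) :
    (∫ x, ‖deriv (fun l : ℝ => l⁻¹ • ω (l⁻¹ • x)) lam‖ ^ 2) ^ ((1 : ℝ) / 2)
      ≤ N * (Real.sqrt lam)⁻¹ *
        ((∫ x, ‖ω x‖ ^ 2) ^ ((1 : ℝ) / 2) + (∫ x, ‖fderiv ℝ ω x‖ ^ 2) ^ ((1 : ℝ) / 2)) := by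
  set R := N * (Real.sqrt lam)⁻¹ with hR
  have hR1 : 1 ≤ R := by
    have : 1 ≤ (Real.sqrt lam)⁻¹ :=
      (one_le_inv₀ (Real.sqrt_pos.2 hlam)).2 (Real.sqrt_le_one.2 hlam1)
    nlinarith
  have hc : HasCompactSupport ω :=
    (isCompact_closedBall _ _).of_isClosed_subset (isClosed_tsupport ω) hsupp
  have hDc : HasCompactSupport (fderiv ℝ ω) := hc.fderiv ℝ
  have hcont : Continuous ω := hω.continuous
  have hDcont : Continuous (fderiv ℝ ω) := hω.continuous_fderiv (by norm_num)
  set g : EuclideanSpace ℝ (Fin 4) → ℝ := fun y => ‖ω y‖ + ‖fderiv ℝ ω y‖ with hg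
  have hgc : Continuous g := hcont.norm.add hDcont.norm
  have hgs : HasCompactSupport g := hc.norm.add hDc.norm
  have hg2 : Integrable (fun y => (g y) ^ 2) :=
    (hgc.memLp_of_hasCompactSupport hgs).integrable_sq
  have hvec (y : EuclideanSpace ℝ (Fin 4)) : ‖ω y + fderiv ℝ ω y y‖ ≤ R * g y := by
    have hD : ‖fderiv ℝ ω y y‖ ≤ R * ‖fderiv ℝ ω y‖ := by
      by_cases hy : y ∈ tsupport ω
      · have hyR : ‖y‖ ≤ R := by simpa using hsupp hy
        calc _ ≤ ‖fderiv ℝ ω y‖ * ‖y‖ := ContinuousLinearMap.le_opNorm _ _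
          _ ≤ ‖fderiv ℝ ω y‖ * R := by gcongr
          _ = _ := mul_comm _ _
      · have : fderiv ℝ ω y = 0 := by
          by_contra h
          exact hy (support_fderiv_subset ℝ h)
        simp [this]
    have hn := norm_add_le (ω y) (fderiv ℝ ω y y)
    have h0 := norm_nonneg (ω y)
    simp only [hg]
    nlinarith
  have hpt (x : EuclideanSpace ℝ (Fin 4)) :
      ‖deriv (fun l : ℝ => l⁻¹ • ω (l⁻¹ • x)) lam‖ ^ 2
        ≤ ((lam ^ 4)⁻¹ * R ^ 2) * g (lam⁻¹ • x) ^ 2 := by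
    rw [(hasDerivAt_rescale hlam hω x).deriv, norm_smul, norm_neg, Real.norm_of_nonneg
      (by positivity)]
    calc _ ≤ ((lam ^ 2)⁻¹ * (R * g (lam⁻¹ • x))) ^ 2 := by
          gcongr
          exact hvec _
      _ = _ := by field_simp
  have hint : ∫ x, ‖deriv (fun l : ℝ => l⁻¹ • ω (l⁻¹ • x)) lam‖ ^ 2
      ≤ R ^ 2 * ∫ y, g y ^ 2 := by
    calc _ ≤ ∫ x, ((lam ^ 4)⁻¹ * R ^ 2) * g (lam⁻¹ • x) ^ 2 :=
          integral_mono_of_nonneg (Filter.Eventually.of_forall fun x => by positivity)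
            ((hg2.comp_smul (inv_ne_zero hlam.ne')).const_mul _) (Filter.Eventually.of_forall hpt)
      _ = _ := by
          rw [integral_const_mul,
            Measure.integral_comp_inv_smul_of_nonneg volume (fun y => g y ^ 2) hlam.le]
          simp only [finrank_euclideanSpace, Fintype.card_fin, smul_eq_mul]
          field_simp
  simp only [← Real.sqrt_eq_rpow]
  calc _ ≤ √(R ^ 2 * ∫ y, g y ^ 2) := Real.sqrt_le_sqrt hint
    _ = R * √(∫ y, g y ^ 2) := by
        rw [Real.sqrt_mul (by positivity), Real.sqrt_sq (by linarith)]
    _ ≤ _ := by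
        gcongr
        exact sqrt_integral_add_sq_le hcont.norm hDcont.norm hc.norm hDc.norm
          (fun _ => norm_nonneg _) (fun _ => norm_nonneg _)
end

section
/- (Logarithmic cut-off lemma.) There is a universal constant K < ∞ with the following property. For every λ > 0 and every N > 4 there exists a C^∞ function β : ℝ⁴ → ℝ such that 0 ≤ β ≤ 1, β(x) = 1 whenever ‖x‖ ≥ (1/2)·λ^{1/2}, β(x) = 0 whenever ‖x‖ ≤ N⁻¹·λ^{1/2}, and whose gradient satisfies the L⁴ bound (∫_{ℝ⁴} ‖∇β(x)‖⁴ dx)^{1/4} ≤ K·(log N)^{−3/4}. -/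
/-!
The cut-off is radial and linear in `log ‖x‖` up to smoothing. With `r₀ = N⁻¹ √λ`, `r₁ = √λ / 2`
and `L = log (r₁ / r₀) = log (N / 2)`, take `β x = S (log (‖x‖ / r₀) / L)`, where `S` is a fixed
smooth step from `0` to `1` on `[0, 1]`. If `M` bounds `|S'|`, then `‖∇β x‖ ≤ M / (L ‖x‖)`, and
`∇β` vanishes off the annulus `r₀ ≤ ‖x‖ ≤ r₁` (`norm_fderiv_logCutoff_le`). In dimension four the
polar density `r³` turns `‖x‖⁻⁴` into `dr / r`, whose integral over `[r₀, r₁]` is exactly `L`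
(`integral_annulusBound`). Hence `∫ ‖∇β‖⁴ ≤ 4 V M⁴ / L³` with `V` the volume of the unit ball, and
`N > 4` gives `L ≥ (log N) / 2`, so the constant depends on neither `λ` nor `N`.
-/

open MeasureTheory

/-- The radial cut-off `S (log (‖x‖ / r₀) / log (r₁ / r₀))`, with `S = Real.smoothTransition`.
The value at the origin is set by hand, since `Real.log 0 = 0` is not `-∞`. -/
noncomputable def logCutoff (r₀ r₁ : ℝ) (x : EuclideanSpace ℝ (Fin 4)) : ℝ :=
  open Classical in
  if x = 0 then 0 else Real.smoothTransition (Real.log (‖x‖ / r₀) / Real.log (r₁ / r₀))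

/-- The radial profile `(M / (L r))⁴` on `[r₀, r₁]`, extended by zero, where `L = log (r₁ / r₀)`;
it dominates the fourth power of the gradient of `logCutoff r₀ r₁`. -/
noncomputable def annulusBound (M r₀ r₁ : ℝ) : ℝ → ℝ :=
  (Set.Icc r₀ r₁).indicator fun r => (M / (Real.log (r₁ / r₀) * r)) ^ 4

lemma exists_bound_deriv_smoothTransition :
    ∃ M : ℝ, 0 ≤ M ∧ ∀ t ∈ Set.Icc (0 : ℝ) 1, |deriv Real.smoothTransition t| ≤ M := by
  have hc : Continuous (deriv Real.smoothTransition) :=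
    (Real.smoothTransition.contDiff (n := 1)).continuous_deriv (by norm_num)
  obtain ⟨M, hM⟩ := isCompact_Icc.exists_bound_of_continuousOn (s := Set.Icc (0 : ℝ) 1)
    hc.continuousOn
  exact ⟨M, (norm_nonneg _).trans (hM 0 (by simp)), hM⟩

section

variable {r₀ r₁ : ℝ}

lemma logCutoff_eq_zero (h₀ : 0 < r₀) (h : r₀ < r₁) {x : EuclideanSpace ℝ (Fin 4)}
    (hx : ‖x‖ ≤ r₀) : logCutoff r₀ r₁ x = 0 := by
  unfold logCutoff
  split_ifs with hx0
  · rfl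
  · have hL : 0 < Real.log (r₁ / r₀) := Real.log_pos ((one_lt_div h₀).2 h)
    refine Real.smoothTransition.zero_of_nonpos (div_nonpos_of_nonpos_of_nonneg ?_ hL.le)
    exact Real.log_nonpos (by positivity) ((div_le_one h₀).2 hx)

lemma logCutoff_eq_one (h₀ : 0 < r₀) (h : r₀ < r₁) {x : EuclideanSpace ℝ (Fin 4)}
    (hx : r₁ ≤ ‖x‖) : logCutoff r₀ r₁ x = 1 := by
  have hx0 : x ≠ 0 := norm_pos_iff.1 (by linarith)
  have hL : 0 < Real.log (r₁ / r₀) := Real.log_pos ((one_lt_div h₀).2 h)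
  have h₁ : 0 < r₁ := h₀.trans h
  rw [logCutoff, if_neg hx0]
  refine Real.smoothTransition.one_of_one_le ((one_le_div hL).2 ?_)
  exact Real.log_le_log (by positivity) (by gcongr)

lemma logCutoff_eventuallyEq {x : EuclideanSpace ℝ (Fin 4)} (hx : x ≠ 0) :
    logCutoff r₀ r₁ =ᶠ[nhds x]
      fun y => Real.smoothTransition (Real.log (‖y‖ / r₀) / Real.log (r₁ / r₀)) := by
  filter_upwards [isOpen_ne.mem_nhds hx] with y hy
  exact if_neg hy

lemma contDiff_logCutoff (h₀ : 0 < r₀) (h : r₀ < r₁) :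
    ContDiff ℝ (⊤ : ℕ∞) (logCutoff r₀ r₁) := by
  rw [contDiff_iff_contDiffAt]
  intro x
  by_cases hx : x = 0
  · refine (contDiffAt_const (c := (0 : ℝ))).congr_of_eventuallyEq ?_
    filter_upwards [Metric.ball_mem_nhds x h₀] with y hy
    exact logCutoff_eq_zero h₀ h (by simpa [hx] using (Metric.mem_ball.1 hy).le)
  · refine ContDiffAt.congr_of_eventuallyEq ?_ (logCutoff_eventuallyEq hx)
    have hn : ‖x‖ / r₀ ≠ 0 := (div_pos (norm_pos_iff.2 hx) h₀).ne'
    exact Real.smoothTransition.contDiffAt.comp x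
      ((((contDiffAt_norm ℝ hx).div_const r₀).log hn).div_const _)

lemma norm_fderiv_logCutoff_le (h₀ : 0 < r₀) (h : r₀ < r₁) {M : ℝ} (hM0 : 0 ≤ M)
    (hM : ∀ t ∈ Set.Icc (0 : ℝ) 1, |deriv Real.smoothTransition t| ≤ M)
    (x : EuclideanSpace ℝ (Fin 4)) :
    ‖fderiv ℝ (logCutoff r₀ r₁) x‖ ^ 4 ≤ annulusBound M r₀ r₁ ‖x‖ := by
  have hL : 0 < Real.log (r₁ / r₀) := Real.log_pos ((one_lt_div h₀).2 h)
  unfold annulusBound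
  rcases lt_or_ge ‖x‖ r₀ with hlt | hge
  · have he : logCutoff r₀ r₁ =ᶠ[nhds x] fun _ => 0 := by
      filter_upwards [(isOpen_lt continuous_norm continuous_const).mem_nhds hlt] with y hy
      exact logCutoff_eq_zero h₀ h (le_of_lt hy)
    rw [he.fderiv_eq, Set.indicator_of_notMem (by simp [hlt])]
    simp
  rcases lt_or_ge r₁ ‖x‖ with hgt | hle
  · have he : logCutoff r₀ r₁ =ᶠ[nhds x] fun _ => 1 := by
      filter_upwards [(isOpen_lt continuous_const continuous_norm).mem_nhds hgt] with y hy
      exact logCutoff_eq_one h₀ h (le_of_lt hy)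
    rw [he.fderiv_eq, Set.indicator_of_notMem (by simp [hgt])]
    simp
  have hmem : ‖x‖ ∈ Set.Icc r₀ r₁ := ⟨hge, hle⟩
  rw [Set.indicator_of_mem hmem]
  have hpos : 0 < ‖x‖ := h₀.trans_le hge
  have hx : x ≠ 0 := norm_pos_iff.1 hpos
  gcongr
  set t := Real.log (‖x‖ / r₀) / Real.log (r₁ / r₀) with ht
  have ht01 : t ∈ Set.Icc (0 : ℝ) 1 := by
    refine ⟨div_nonneg (Real.log_nonneg ((one_le_div h₀).2 hge)) hL.le, (div_le_one hL).2 ?_⟩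
    exact Real.log_le_log (by positivity) (by gcongr)
  have hS : HasDerivAt Real.smoothTransition (deriv Real.smoothTransition t) t :=
    ((Real.smoothTransition.contDiff (n := 1)).differentiable (by norm_num) t).hasDerivAt
  have hlog : HasDerivAt (fun r : ℝ => Real.log (r / r₀) / Real.log (r₁ / r₀))
      (1 / r₀ / (‖x‖ / r₀) / Real.log (r₁ / r₀)) ‖x‖ :=
    (((hasDerivAt_id ‖x‖).div_const r₀).log (by simp; exact ⟨hx, h₀.ne'⟩)).div_const _
  have hnorm : HasFDerivAt (fun y : EuclideanSpace ℝ (Fin 4) => ‖y‖)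
      (fderiv ℝ (fun y : EuclideanSpace ℝ (Fin 4) => ‖y‖) x) x :=
    ((contDiffAt_norm ℝ hx (n := 1)).differentiableAt (by norm_num)).hasFDerivAt
  have hf := (hS.comp ‖x‖ hlog).comp_hasFDerivAt x hnorm
  have hn1 : ‖fderiv ℝ (fun y : EuclideanSpace ℝ (Fin 4) => ‖y‖) x‖ ≤ 1 := by
    simpa using norm_fderiv_le_of_lipschitz ℝ (x₀ := x)
      (lipschitzWith_one_norm (E := EuclideanSpace ℝ (Fin 4)))
  rw [(logCutoff_eventuallyEq hx).fderiv_eq]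
  have hf' := hf.fderiv
  simp only [Function.comp_def] at hf'
  rw [hf', norm_smul, Real.norm_eq_abs, abs_mul]
  have e : |1 / r₀ / (‖x‖ / r₀) / Real.log (r₁ / r₀)| = 1 / (Real.log (r₁ / r₀) * ‖x‖) := by
    rw [abs_of_pos (by positivity)]
    field_simp
  rw [e]
  calc _ ≤ M * (1 / (Real.log (r₁ / r₀) * ‖x‖)) * 1 := by
        gcongr
        exact hM t ht01
    _ = _ := by ring

/-- In polar coordinates on `ℝ⁴` the density `r³` reduces the fourth power of `1 / r` to `1 / r`. -/
lemma pow_smul_annulusBound (h₀ : 0 < r₀) (M : ℝ) (r : ℝ) :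
    r ^ (Module.finrank ℝ (EuclideanSpace ℝ (Fin 4)) - 1) • annulusBound M r₀ r₁ r =
      (Set.Icc r₀ r₁).indicator (fun r => (M / Real.log (r₁ / r₀)) ^ 4 * r⁻¹) r := by
  unfold annulusBound
  by_cases hr : r ∈ Set.Icc r₀ r₁
  · have : r ≠ 0 := (h₀.trans_le hr.1).ne'
    rw [Set.indicator_of_mem hr, Set.indicator_of_mem hr]
    simp only [finrank_euclideanSpace, Fintype.card_fin, smul_eq_mul, div_pow, mul_pow,
      Nat.add_one_sub_one]
    field_simp
  · simp [hr]

lemma integrable_annulusBound (h₀ : 0 < r₀) (M : ℝ) :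
    Integrable (fun x : EuclideanSpace ℝ (Fin 4) => annulusBound M r₀ r₁ ‖x‖) := by
  rw [integrable_fun_norm_addHaar]
  simp only [pow_smul_annulusBound h₀]
  refine Integrable.integrableOn ((integrable_indicator_iff measurableSet_Icc).2 ?_)
  refine ContinuousOn.integrableOn_Icc (continuousOn_const.mul (continuousOn_inv₀.mono ?_))
  intro r hr
  exact (h₀.trans_le hr.1).ne'

lemma integral_annulusBound (h₀ : 0 < r₀) (h : r₀ < r₁) (M : ℝ) :
    ∫ x : EuclideanSpace ℝ (Fin 4), annulusBound M r₀ r₁ ‖x‖ =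
      4 * volume.real (Metric.ball (0 : EuclideanSpace ℝ (Fin 4)) 1) * M ^ 4 /
        Real.log (r₁ / r₀) ^ 3 := by
  have hL : 0 < Real.log (r₁ / r₀) := Real.log_pos ((one_lt_div h₀).2 h)
  have hsub : Set.Ioi 0 ∩ Set.Icc r₀ r₁ = Set.Icc r₀ r₁ :=
    Set.inter_eq_right.2 fun r hr => h₀.trans_le hr.1
  rw [integral_fun_norm_addHaar]
  simp only [pow_smul_annulusBound h₀]
  rw [setIntegral_indicator measurableSet_Icc, hsub, integral_Icc_eq_integral_Ioc,
    ← intervalIntegral.integral_of_le h.le, intervalIntegral.integral_const_mul,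
    integral_inv_of_pos h₀ (h₀.trans h)]
  simp only [finrank_euclideanSpace, Fintype.card_fin, smul_eq_mul, nsmul_eq_mul, div_pow]
  push_cast
  field_simp

end

/-- Logarithmic cut-off lemma, Lemma 5.1.2 of the paper / Donaldson–
Kronheimer Lemma 7.2.10. There is a universal constant `K` such that for every `λ > 0` and
every `N > 4` there is a `C^∞` function `β : ℝ⁴ → ℝ` with `0 ≤ β ≤ 1`, `β = 1` on
`{‖x‖ ≥ (1/2)·λ^{1/2}}`, `β = 0` on `{‖x‖ ≤ N⁻¹·λ^{1/2}}`, and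
`‖∇β‖_{L⁴} ≤ K·(log N)^{−3/4}`. -/
theorem logarithmic_cutoff_lemma :
    ∃ K : ℝ, ∀ lam : ℝ, 0 < lam → ∀ N : ℝ, 4 < N →
      ∃ β : EuclideanSpace ℝ (Fin 4) → ℝ, ContDiff ℝ (⊤ : ℕ∞) β ∧
        (∀ x, 0 ≤ β x ∧ β x ≤ 1) ∧
        (∀ x, Real.sqrt lam / 2 ≤ ‖x‖ → β x = 1) ∧
        (∀ x, ‖x‖ ≤ N⁻¹ * Real.sqrt lam → β x = 0) ∧
        (∫ x, ‖fderiv ℝ β x‖ ^ 4) ^ ((1 : ℝ) / 4) ≤ K * Real.log N ^ (-(3 : ℝ) / 4) := by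
  obtain ⟨M, hM0, hM⟩ := exists_bound_deriv_smoothTransition
  set V := volume.real (Metric.ball (0 : EuclideanSpace ℝ (Fin 4)) 1) with hV
  have hV0 : 0 ≤ V := measureReal_nonneg
  refine ⟨(32 * V * M ^ 4) ^ ((1 : ℝ) / 4), fun lam hlam N hN => ?_⟩
  have hN0 : 0 < N := by linarith
  have hs : 0 < Real.sqrt lam := Real.sqrt_pos.2 hlam
  have h₀ : 0 < N⁻¹ * Real.sqrt lam := by positivity
  have h : N⁻¹ * Real.sqrt lam < Real.sqrt lam / 2 := by
    have : N⁻¹ < 2⁻¹ := inv_strictAnti₀ (by norm_num) (by linarith)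
    nlinarith
  refine ⟨logCutoff (N⁻¹ * Real.sqrt lam) (Real.sqrt lam / 2), contDiff_logCutoff h₀ h,
    fun x => ?_, fun x hx => logCutoff_eq_one h₀ h hx, fun x hx => logCutoff_eq_zero h₀ h hx, ?_⟩
  · unfold logCutoff
    split_ifs
    · simp
    · exact ⟨Real.smoothTransition.nonneg _, Real.smoothTransition.le_one _⟩
  have hlogN : 0 < Real.log N := Real.log_pos (by linarith)
  -- `N > 4` means `2 log 2 ≤ log N`, so at most half of `log N` is lost in `log (N / 2)`.
  have hL : Real.log N / 2 ≤ Real.log (Real.sqrt lam / 2 / (N⁻¹ * Real.sqrt lam)) := by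
    have e : Real.sqrt lam / 2 / (N⁻¹ * Real.sqrt lam) = N / 2 := by field_simp
    have h4 : Real.log 4 ≤ Real.log N := Real.log_le_log (by norm_num) hN.le
    have h42 : Real.log 4 = 2 * Real.log 2 := by
      rw [show (4 : ℝ) = 2 ^ 2 by norm_num, Real.log_pow]
      norm_num
    rw [e, Real.log_div hN0.ne' (by norm_num)]
    linarith
  have hI : ∫ x, ‖fderiv ℝ (logCutoff (N⁻¹ * Real.sqrt lam) (Real.sqrt lam / 2)) x‖ ^ 4 ≤
      32 * V * M ^ 4 * Real.log N ^ (-(3 : ℝ)) := by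
    calc _ ≤ ∫ x : EuclideanSpace ℝ (Fin 4),
          annulusBound M (N⁻¹ * Real.sqrt lam) (Real.sqrt lam / 2) ‖x‖ :=
          integral_mono_of_nonneg (.of_forall fun x => by positivity)
            (integrable_annulusBound h₀ M)
            (.of_forall fun x => norm_fderiv_logCutoff_le h₀ h hM0 hM x)
      _ = 4 * V * M ^ 4 / Real.log (Real.sqrt lam / 2 / (N⁻¹ * Real.sqrt lam)) ^ 3 :=
          integral_annulusBound h₀ h M
      _ ≤ 4 * V * M ^ 4 / (Real.log N / 2) ^ 3 := by gcongr
      _ = _ := by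
          rw [Real.rpow_neg hlogN.le, show (3 : ℝ) = ((3 : ℕ) : ℝ) by norm_num,
            Real.rpow_natCast]
          field_simp
          ring
  calc _ ≤ (32 * V * M ^ 4 * Real.log N ^ (-(3 : ℝ))) ^ ((1 : ℝ) / 4) :=
        Real.rpow_le_rpow (integral_nonneg fun x => by positivity) hI (by norm_num)
    _ = _ := by
        rw [Real.mul_rpow (by positivity) (by positivity), ← Real.rpow_mul hlogN.le]
        norm_num
end
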